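/- arXiv:1401.7498 — 2 statements merged into one kernel-verified Lean document; each statement's English description precedes it below -/
import Mathlib

section
/- Let E₁, E₂ be a pair of word equations on n unknowns having a common solution of rank n − 1. If E₁ is not balanced, then every solution of E₁ of rank n − 1 is also a solution of E₂. -/
open Polynomial

/-- The characteristic polynomial `P(w)` of a word. -/
noncomputable def wordPoly (w : List ℕ) : Polynomial ℤ :=
  ∑ i ∈ Finset.range w.length, Polynomial.C (w.getD i 0 : ℤ) * Polynomial.X ^ i

/-- Application of a morphism (given by the images of the unknowns) to a word. -/
def mApply {n : ℕ} {β : Type*} (h : Fin n → List β) (w : List (Fin n)) : List β :=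
  (w.map h).flatten

/-- The morphism maps every unknown to a word over the alphabet `A`. -/
def IntoAlph {n : ℕ} (A : Finset ℕ) (h : Fin n → List ℕ) : Prop :=
  ∀ i, ∀ a ∈ h i, a ∈ A

/-- `w` is a product of words from `A`. -/
def InStar (A : Finset (List ℕ)) (w : List ℕ) : Prop :=
  ∃ l : List (List ℕ), (∀ u ∈ l, u ∈ A) ∧ l.flatten = w

/-- The combinatorial rank of a morphism: the smallest `r` such that there is a set of
`r` words whose products contain all images of the unknowns. -/
noncomputable def mRank {n : ℕ} (h : Fin n → List ℕ) : ℕ :=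
  sInf {r | ∃ A : Finset (List ℕ), A.card = r ∧ ∀ i, InStar A (h i)}

/-- The length type of a morphism, as a rational vector. -/
def lenQ {n : ℕ} (h : Fin n → List ℕ) : Fin n → ℚ :=
  fun i => ((h i).length : ℚ)

/-- `|w|_L`: the length of the image of `w` under any morphism of length type `L`. -/
def lenL {n : ℕ} (L : Fin n → ℕ) (w : List (Fin n)) : ℕ :=
  (w.map L).sum

/-- The polynomial `Q_{E,x,L}` for the word equation `u = v`, the unknown `x` and the
length type `L`. -/
noncomputable def eqPoly {n : ℕ} (u v : List (Fin n)) (x : Fin n) (L : Fin n → ℕ) :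
    Polynomial ℤ :=
  (∑ i ∈ Finset.range u.length,
      if u.getD i x = x then (Polynomial.X : Polynomial ℤ) ^ lenL L (u.take i) else 0)
    - ∑ i ∈ Finset.range v.length,
      if v.getD i x = x then (Polynomial.X : Polynomial ℤ) ^ lenL L (v.take i) else 0

/-- Embedding of `ℤ[X]` into the field `ℚ(X)` of rational functions. -/
noncomputable def toRF (p : Polynomial ℤ) : RatFunc ℚ :=
  algebraMap (Polynomial ℚ) (RatFunc ℚ) (p.map (Int.castRingHom ℚ))

/-!
Over a commutative ring, a word in the unknowns `x` acts as the composition of the affine maps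
`t ↦ a x + w x * t`; its translation part is linear in `a` and is the Fox differential of the word
at the weights `w`, evaluated at `a`.

A common solution `g` of rank `n - 1` factors as `θ ∘ α`, where `θ` is injective, `α` involves at
least `n - 1` unknowns and the abelianization of `α` is injective. So `α` solves both equations,
and by the chain rule `dE₁ ∘ J(α) = 0 = dE₂ ∘ J(α)`, where `J(α)` is the Fox Jacobian of `α`. When
`J(α)` is injective and `dE₁ ≠ 0`, counting dimensions gives `ker dE₁ = range J(α) ⊆ ker dE₂`.

Let `h` solve `E₁`. At `w = 1` both conditions hold, the second because `E₁` is unbalanced. Hence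
the lengths `|h x|` lift through `α` to a real vector `v`, and for `q > 0` the weights `q ^ |h x|`
are induced through `α` by the weights `q ^ v j`. For `q` close to `1` both conditions persist, so
`ker dE₁ ⊆ ker dE₂` at the weights `q ^ |h x|`. Taking for `a x` the value at `q` of the generating
polynomial of `h x`, we see that the generating polynomials of the two sides of `h(E₂)` agree at
infinitely many `q`, and they determine the words.
-/

open Function

universe u

/-- The Fox differential of a word at the weights `w`, in the direction `a`: the sum of `a i` over
the letters `i` of the word, each multiplied by the product of the weights of the letters before
it. -/
def foxDifferential {ι R : Type*} [CommSemiring R] (w : ι → R) : List ι → (ι → R) →ₗ[R] R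
  | [] => 0
  | i :: u => LinearMap.proj i + w i • foxDifferential w u

/-- The Fox Jacobian, at the weights `w`, of the substitution `i ↦ α i`: its rows are the Fox
differentials of the words `α i`. -/
def foxJacobian {ι κ R : Type*} [CommSemiring R] (w : κ → R) (α : ι → List κ) :
    (κ → R) →ₗ[R] (ι → R) :=
  LinearMap.pi fun i => foxDifferential w (α i)

section FoxCalculus

variable {ι κ R : Type*} [CommSemiring R]

@[simp]
theorem foxDifferential_nil (w : ι → R) : foxDifferential w [] = 0 := rfl

@[simp]
theorem foxDifferential_cons_apply (w : ι → R) (i : ι) (u : List ι) (a : ι → R) :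
    foxDifferential w (i :: u) a = a i + w i * foxDifferential w u a := rfl

@[simp]
theorem foxJacobian_apply (w : κ → R) (α : ι → List κ) (a : κ → R) (i : ι) :
    foxJacobian w α a i = foxDifferential w (α i) a := rfl

theorem foxDifferential_append_apply (w : ι → R) (u v : List ι) (a : ι → R) :
    foxDifferential w (u ++ v) a =
      foxDifferential w u a + (u.map w).prod * foxDifferential w v a := by
  induction u with
  | nil => simp
  | cons i u ih =>
    simp only [List.cons_append, foxDifferential_cons_apply, ih, List.map_cons, List.prod_cons]
    ring

theorem foxDifferential_flatMap (w : κ → R) (α : ι → List κ) (u : List ι) :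
    foxDifferential w (u.flatMap α) =
      foxDifferential (fun i => ((α i).map w).prod) u ∘ₗ foxJacobian w α := by
  ext1 a
  induction u with
  | nil => simp
  | cons i u ih => simp_all [foxDifferential_append_apply]

theorem foxJacobian_flatMap {μ : Type*} (w : μ → R) (α : ι → List κ) (β : κ → List μ) :
    foxJacobian w (fun i => (α i).flatMap β) =
      foxJacobian (fun j => ((β j).map w).prod) α ∘ₗ foxJacobian w β := by
  ext1 a
  funext i
  simp [foxDifferential_flatMap]

theorem foxDifferential_const_flatMap (q : R) (h : ι → List κ) (u : List ι) (c : κ → R) :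
    foxDifferential (fun _ => q) (u.flatMap h) c =
      foxDifferential (fun i => q ^ (h i).length) u (foxJacobian (fun _ => q) h c) := by
  simp [foxDifferential_flatMap]

theorem foxDifferential_one_apply (u : List ι) (a : ι → R) :
    foxDifferential 1 u a = (u.map a).sum := by
  induction u with
  | nil => simp
  | cons i u ih => simp [ih]

theorem foxDifferential_one_single [DecidableEq ι] (u : List ι) (x : ι) :
    foxDifferential (1 : ι → R) u (Pi.single x 1) = u.count x := by
  rw [foxDifferential_one_apply]
  induction u with
  | nil => simp
  | cons i u ih => simp [ih, List.count_cons, Pi.single_apply, add_comm]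

theorem foxDifferential_one_length {β : Type*} (h : ι → List β) (u : List ι) :
    foxDifferential (1 : ι → R) u (fun i => ((h i).length : R)) = (u.flatMap h).length := by
  simp [foxDifferential_one_apply, List.length_flatMap, Nat.cast_list_sum, comp_def]

theorem map_foxDifferential {S : Type*} [CommSemiring S] (f : R →+* S) (w : ι → R) (u : List ι)
    (a : ι → R) : f (foxDifferential w u a) = foxDifferential (f ∘ w) u (f ∘ a) := by
  induction u with
  | nil => simp
  | cons i u ih => simp [ih]

theorem continuous_foxDifferential [TopologicalSpace R] [IsTopologicalSemiring R] (u : List ι)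
    (a : ι → R) : Continuous fun w : ι → R => foxDifferential w u a := by
  induction u with
  | nil => exact continuous_const
  | cons i u ih => exact continuous_const.add ((continuous_apply i).mul ih)

end FoxCalculus

section Separation

variable {β R : Type*}

theorem eq_of_foxDifferential_X_eq [CommRing R] [Nontrivial R] {u v : List β}
    (huv : ∀ c : β → R,
      foxDifferential (fun _ => (X : R[X])) u (C ∘ c) = foxDifferential (fun _ => X) v (C ∘ c)) :
    u = v := by
  classical
  have heads (c : β → R) := congrArg (coeff · 0) (huv c)
  induction u generalizing v with
  | nil =>
    cases v with
    | nil => rfl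
    | cons b v => simpa using heads 1
  | cons a u ih =>
    cases v with
    | nil => simpa using heads 1
    | cons b v =>
      obtain rfl : a = b := by
        by_contra hab
        simpa [Ne.symm hab] using heads (Pi.single a 1)
      have tails (c : β → R) : foxDifferential (fun _ => (X : R[X])) u (C ∘ c) =
          foxDifferential (fun _ => X) v (C ∘ c) :=
        isRegular_X.left (add_left_cancel (huv c))
      rw [ih tails fun c => congrArg (coeff · 0) (tails c)]

theorem eq_of_infinite_foxDifferential_eq [CommRing R] [IsDomain R] {s : Set R} (hs : s.Infinite)
    {u v : List β}
    (huv : ∀ q ∈ s, foxDifferential (fun _ => q) u = foxDifferential (fun _ => q) v) :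
    u = v := by
  refine eq_of_foxDifferential_X_eq (R := R) fun c =>
    eq_of_infinite_eval_eq _ _ (hs.mono fun q hq => ?_)
  have eval_eq (w : List β) : eval q (foxDifferential (fun _ => (X : R[X])) w (C ∘ c)) =
      foxDifferential (fun _ => q) w c := by
    rw [← coe_evalRingHom, map_foxDifferential]
    simp [comp_def]
  simp [eval_eq, huv q hq]

end Separation

section Kernel

variable {K : Type*} [Field K]

theorem range_eq_ker_of_injective_of_comp_eq_zero {V W : Type*} [AddCommGroup V] [Module K V]
    [AddCommGroup W] [Module K W] [FiniteDimensional K W] {f : V →ₗ[K] W} {φ : Module.Dual K W}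
    (hf : Injective f) (hφ : φ ≠ 0) (hφf : φ ∘ₗ f = 0)
    (hdim : Module.finrank K W ≤ Module.finrank K V + 1) :
    LinearMap.range f = LinearMap.ker φ := by
  refine Submodule.eq_of_le_of_finrank_le (LinearMap.range_le_ker_iff.2 hφf) ?_
  have := Module.Dual.finrank_ker_add_one_of_ne_zero hφ
  rw [LinearMap.finrank_range_of_inj hf]
  omega

variable {ι κ : Type*} [Fintype ι] [Fintype κ]

theorem exists_foxJacobian_eq {α : ι → List κ} (hcard : Fintype.card ι ≤ Fintype.card κ + 1)
    {ω : κ → K} (hα : Injective (foxJacobian ω α)) {w : ι → K}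
    (hw : ∀ i, ((α i).map ω).prod = w i) {u v : List ι} (huv : u.flatMap α = v.flatMap α)
    (hne : foxDifferential w u ≠ foxDifferential w v) {a : ι → K}
    (ha : foxDifferential w u a = foxDifferential w v a) : ∃ b, foxJacobian ω α b = a := by
  obtain rfl : (fun i => ((α i).map ω).prod) = w := funext hw
  rw [← LinearMap.mem_range, range_eq_ker_of_injective_of_comp_eq_zero hα (sub_ne_zero.2 hne)]
  · simp [ha]
  · rw [LinearMap.sub_comp, ← foxDifferential_flatMap, ← foxDifferential_flatMap, huv, sub_self]
  · simpa using hcard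

theorem foxDifferential_eq_of_flatMap_eq {α : ι → List κ}
    (hcard : Fintype.card ι ≤ Fintype.card κ + 1) {ω : κ → K} (hα : Injective (foxJacobian ω α))
    {w : ι → K} (hw : ∀ i, ((α i).map ω).prod = w i) {u v u' v' : List ι}
    (huv : u.flatMap α = v.flatMap α) (huv' : u'.flatMap α = v'.flatMap α)
    (hne : foxDifferential w u ≠ foxDifferential w v) {a : ι → K}
    (ha : foxDifferential w u a = foxDifferential w v a) :
    foxDifferential w u' a = foxDifferential w v' a := by
  obtain ⟨b, rfl⟩ := exists_foxJacobian_eq hcard hα hw huv hne ha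
  obtain rfl : (fun i => ((α i).map ω).prod) = w := funext hw
  rw [← LinearMap.comp_apply, ← LinearMap.comp_apply, ← foxDifferential_flatMap,
    ← foxDifferential_flatMap, huv']

end Kernel

section Openness

variable {ι κ : Type*}

theorem isOpen_setOfPred_injective_foxJacobian {K : Type*} [NontriviallyNormedField K]
    [CompleteSpace K] [Finite ι] [Finite κ] (α : ι → List κ) :
    IsOpen {w : κ → K | Injective (foxJacobian w α)} := by
  classical
  have := Fintype.ofFinite ι
  have := Fintype.ofFinite κ
  have columns (w : κ → K) : Injective (foxJacobian w α) ↔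
      LinearIndependent K fun j => foxJacobian w α (Pi.single j 1) := by
    rw [linearIndependent_iff_injective_fintypeLinearCombination]
    congr! 2
    ext : 3
    simp
  have hcont : Continuous fun (w : κ → K) j => foxJacobian w α (Pi.single j 1) :=
    continuous_pi fun _ => continuous_pi fun _ => continuous_foxDifferential _ _
  simp only [columns]
  exact isOpen_setOfPred_linearIndependent.preimage hcont

theorem isOpen_setOfPred_foxDifferential_ne {R : Type*} [CommSemiring R] [TopologicalSpace R]
    [IsTopologicalSemiring R] [T2Space R] (u v : List ι) :
    IsOpen {w : ι → R | foxDifferential w u ≠ foxDifferential w v} := by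
  simp only [Ne, LinearMap.ext_iff, not_forall, Set.ofPred_exists]
  exact isOpen_iUnion fun a =>
    isOpen_ne_fun (continuous_foxDifferential u a) (continuous_foxDifferential v a)

end Openness

section Refinement

variable {ι κ μ β : Type*}

/-- The words `θ j` refine the words `h i`: each `h i` is a product of words `θ j`, in such a way
that the real linear map induced by the abelianization of the substitution is injective. -/
def RefinedBy (h : ι → List β) (θ : κ → List β) : Prop :=
  ∃ α : ι → List κ, (∀ i, h i = (α i).flatMap θ) ∧ Injective (foxJacobian (1 : κ → ℝ) α)

theorem RefinedBy.refl (h : ι → List β) : RefinedBy h h :=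
  ⟨fun i => [i], by simp, fun a b hab => by simpa [funext_iff] using hab⟩

theorem RefinedBy.trans {h : ι → List β} {θ : κ → List β} {η : μ → List β} (hθ : RefinedBy h θ)
    (hη : RefinedBy θ η) : RefinedBy h η := by
  obtain ⟨α, hα, hα_inj⟩ := hθ
  obtain ⟨γ, hγ, hγ_inj⟩ := hη
  refine ⟨fun i => (α i).flatMap γ, fun i => ?_, ?_⟩
  · rw [hα, List.flatMap_assoc, ← funext hγ]
  · rw [foxJacobian_flatMap]
    simpa [Pi.one_def] using hα_inj.comp hγ_inj

theorem refinedBy_subtype_ne_of_eq_nil {h : ι → List β} {x : ι} (hx : h x = []) :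
    RefinedBy h fun i : {i // i ≠ x} => h i := by
  classical
  refine ⟨fun i => if hi : i = x then [] else [⟨i, hi⟩], fun i => ?_, fun a b hab => ?_⟩
  · by_cases hi : i = x <;> simp [hi, hx]
  · funext i
    simpa [i.2] using congrFun hab i

theorem refinedBy_update_of_eq_append [DecidableEq ι] {h : ι → List β} {x y : ι} (hxy : x ≠ y)
    {t : List β} (ht : h y = h x ++ t) : RefinedBy h (update h y t) := by
  refine ⟨update (fun i => [i]) y [x, y], fun i => ?_, fun a b hab => ?_⟩
  · by_cases hi : i = y
    · subst hi; simp [hxy, ht]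
    · simp [hi]
  · have eq_off (i : ι) (hi : i ≠ y) : a i = b i := by simpa [hi] using congrFun hab i
    funext i
    by_cases hi : i = y
    · subst hi; simpa [eq_off x hxy] using congrFun hab i
    · exact eq_off i hi

theorem injective_flatMap_of_prefixFree {h : ι → List β} (hne : ∀ i, h i ≠ [])
    (hpre : Pairwise fun x y => ¬ h x <+: h y) : Injective fun u : List ι => u.flatMap h := by
  intro u
  induction u with
  | nil => intro v hv; cases v <;> simp_all
  | cons i u ih =>
    rintro (_ | ⟨j, v⟩) hv
    · simp [hne] at hv
    · simp only [List.flatMap_cons] at hv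
      obtain rfl : i = j := by
        by_contra hij
        rcases List.prefix_or_prefix_of_prefix (List.prefix_append (h i) (u.flatMap h))
          (hv ▸ List.prefix_append (h j) (v.flatMap h)) with hpfx | hpfx
        · exact hpre hij hpfx
        · exact hpre (Ne.symm hij) hpfx
      rw [ih (List.append_cancel_left hv)]

theorem sum_length_update_lt [Fintype ι] [DecidableEq ι] {h : ι → List β} {x y : ι}
    (hx : h x ≠ []) {t : List β} (ht : h y = h x ++ t) :
    ∑ i, ((update h y t i).length + 1) < ∑ i, ((h i).length + 1) := by
  have hlt : t.length < (h y).length := by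
    simpa [ht] using List.length_pos_iff.2 hx
  refine Finset.sum_lt_sum (fun i _ => ?_) ⟨y, Finset.mem_univ _, by simpa using hlt⟩
  by_cases hi : i = y
  · subst hi; simpa using hlt.le
  · simp [hi]

theorem exists_refinedBy_injective_flatMap {ι : Type u} [Finite ι] (h : ι → List β) :
    ∃ (κ : Type u) (_ : Fintype κ) (θ : κ → List β),
      RefinedBy h θ ∧ Injective fun u : List κ => u.flatMap θ := by
  classical
  have := Fintype.ofFinite ι
  induction hm : ∑ i, ((h i).length + 1) using Nat.strong_induction_on generalizing ι with
  | _ m ih =>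
  subst hm
  by_cases hne : ∀ i, h i ≠ []
  · by_cases hpre : Pairwise fun x y => ¬ h x <+: h y
    · exact ⟨ι, inferInstance, h, .refl h, injective_flatMap_of_prefixFree hne hpre⟩
    · simp only [Pairwise, not_forall, not_not] at hpre
      obtain ⟨x, y, hxy, t, ht⟩ := hpre
      obtain ⟨κ, _, θ, hθ, hinj⟩ := ih _ (sum_length_update_lt (hne x) ht.symm) _ _ rfl
      exact ⟨κ, ‹_›, θ, (refinedBy_update_of_eq_append hxy ht.symm).trans hθ, hinj⟩
  · push Not at hne
    obtain ⟨x, hx⟩ := hne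
    obtain ⟨κ, _, θ, hθ, hinj⟩ := ih _ (by
      rw [Fintype.sum_eq_add_sum_subtype_ne _ x]
      omega) (fun i : {i // i ≠ x} => h i) _ rfl
    exact ⟨κ, ‹_›, θ, (refinedBy_subtype_ne_of_eq_nil hx).trans hθ, hinj⟩

end Refinement

section WordEquations

theorem mRank_le_card_of_refinedBy {n : ℕ} {κ : Type*} [Fintype κ] {g : Fin n → List ℕ}
    {θ : κ → List ℕ} (hθ : RefinedBy g θ) : mRank g ≤ Fintype.card κ := by
  classical
  obtain ⟨α, hα, -⟩ := hθ
  have le_image : mRank g ≤ (Finset.univ.image θ).card :=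
    Nat.sInf_le ⟨_, rfl, fun i => ⟨(α i).map θ, by simp, (hα i).symm⟩⟩
  exact le_image.trans Finset.card_image_le

theorem prod_map_rpow {ι : Type*} {q : ℝ} (hq : 0 < q) (v : ι → ℝ) (u : List ι) :
    (u.map fun j => q ^ v j).prod = q ^ (u.map v).sum := by
  induction u with
  | nil => simp
  | cons i u ih => simp [ih, Real.rpow_add hq]

variable {ι κ β : Type*} [Fintype ι] [Fintype κ] {α : ι → List κ}

theorem flatMap_eq_of_foxDifferential_ne (hcard : Fintype.card ι ≤ Fintype.card κ + 1)
    (hα : Injective (foxJacobian (1 : κ → ℝ) α)) {u₁ v₁ u₂ v₂ : List ι}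
    (hα₁ : u₁.flatMap α = v₁.flatMap α) (hα₂ : u₂.flatMap α = v₂.flatMap α)
    (hne : foxDifferential (1 : ι → ℝ) u₁ ≠ foxDifferential 1 v₁)
    {h : ι → List β} (hh : u₁.flatMap h = v₁.flatMap h) : u₂.flatMap h = v₂.flatMap h := by
  obtain ⟨v, hv⟩ : ∃ v : κ → ℝ, foxJacobian 1 α v = fun i => ((h i).length : ℝ) :=
    exists_foxJacobian_eq hcard hα (by simp [Pi.one_def]) hα₁ hne
      (by simp only [foxDifferential_one_length, hh])
  have induced {q : ℝ} (hq : 0 < q) (i : ι) :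
      ((α i).map fun j => q ^ v j).prod = q ^ (h i).length := by
    rw [prod_map_rpow hq, ← foxDifferential_one_apply, ← foxJacobian_apply, hv, Real.rpow_natCast]
  have injective_near : ∀ᶠ q : ℝ in nhds 1, Injective (foxJacobian (fun j => q ^ v j) α) :=
    (continuousAt_pi.2 fun j => Real.continuousAt_rpow_const 1 (v j) (.inl one_ne_zero))
      |>.eventually_mem ((isOpen_setOfPred_injective_foxJacobian α).mem_nhds
        (by simpa [← Pi.one_def] using hα))
  have ne_near : ∀ᶠ q : ℝ in nhds 1, foxDifferential (fun i => q ^ (h i).length) u₁ ≠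
      foxDifferential (fun i => q ^ (h i).length) v₁ :=
    (continuousAt_pi.2 fun i => continuousAt_id.pow (h i).length)
      |>.eventually_mem ((isOpen_setOfPred_foxDifferential_ne u₁ v₁).mem_nhds
        (by simpa [← Pi.one_def] using hne))
  refine eq_of_infinite_foxDifferential_eq (infinite_of_mem_nhds (1 : ℝ)
    (injective_near.and (ne_near.and (lt_mem_nhds one_pos)))) fun q ⟨hinj, hneq, hq⟩ => ?_
  ext1 c
  rw [foxDifferential_const_flatMap, foxDifferential_const_flatMap]
  refine foxDifferential_eq_of_flatMap_eq hcard hinj (induced hq) hα₁ hα₂ hneq ?_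
  rw [← foxDifferential_const_flatMap, ← foxDifferential_const_flatMap, hh]

end WordEquations

theorem unbalanced_implies_subset_general {n : ℕ} {β : Type*}
    (e₁ e₂ : List (Fin n) × List (Fin n))
    (hcommon : ∃ g : Fin n → List ℕ,
      mApply g e₁.1 = mApply g e₁.2 ∧ mApply g e₂.1 = mApply g e₂.2 ∧ n ≤ mRank g + 1)
    (hunbal : ∃ x : Fin n, e₁.1.count x ≠ e₁.2.count x) (h : Fin n → List β)
    (hh : mApply h e₁.1 = mApply h e₁.2) : mApply h e₂.1 = mApply h e₂.2 := by
  obtain ⟨g, hg₁, hg₂, hrank⟩ := hcommon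
  obtain ⟨x, hx⟩ := hunbal
  obtain ⟨κ, _, θ, hθ, hθ_inj⟩ := exists_refinedBy_injective_flatMap g
  have hcard : n ≤ Fintype.card κ + 1 := by
    have := mRank_le_card_of_refinedBy hθ
    omega
  obtain ⟨α, hα, hα_inj⟩ := hθ
  have solves {u v : List (Fin n)} (huv : mApply g u = mApply g v) :
      u.flatMap α = v.flatMap α := by
    have refined (w : List (Fin n)) : mApply g w = (w.flatMap α).flatMap θ := by
      rw [List.flatMap_assoc, ← funext hα]
      rfl
    exact hθ_inj (by simpa only [refined] using huv)
  refine flatMap_eq_of_foxDifferential_ne (by simpa using hcard) hα_inj (solves hg₁) (solves hg₂)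
    (fun heq => hx ?_) hh
  have := LinearMap.congr_fun heq (Pi.single x 1)
  simpa only [foxDifferential_one_single, Nat.cast_inj] using this

/-- Let `E₁, E₂` be a pair of word equations on `n` unknowns having a common solution of
rank `n − 1`. If `E₁` is not balanced, then every solution of `E₁` of rank `n − 1` is also
a solution of `E₂`. -/
theorem unbalanced_implies_subset {n : ℕ}
    (A : Finset ℕ) (hA : ∀ a ∈ A, 0 < a)
    (e₁ e₂ : List (Fin n) × List (Fin n))
    (hcommon : ∃ h : Fin n → List ℕ, IntoAlph A h ∧
      mApply h e₁.1 = mApply h e₁.2 ∧ mApply h e₂.1 = mApply h e₂.2 ∧ mRank h = n - 1)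
    (hunbal : ∃ x : Fin n, e₁.1.count x ≠ e₁.2.count x) :
    ∀ h : Fin n → List ℕ, IntoAlph A h → mApply h e₁.1 = mApply h e₁.2 →
      mRank h = n - 1 → mApply h e₂.1 = mApply h e₂.2 := by
  obtain ⟨g, -, hg₁, hg₂, hrank⟩ := hcommon
  exact fun h _ hh _ =>
    unbalanced_implies_subset_general e₁ e₂ ⟨g, hg₁, hg₂, by omega⟩ hunbal h hh
end

section
/- Let E₁, …, E_m be nontrivial word equations on n unknowns such that Sol_{n−1}(E₁) ⊋ Sol_{n−1}(E₁, E₂) ⊋ ⋯ ⊋ Sol_{n−1}(E₁, …, E_m) ≠ ∅, where Sol_{n−1} denotes the set of common solutions of rank n − 1. If the set of length types (regarded as vectors in ℚ^n) of the common solutions of E₁ and E₂ of rank n − 1 is covered by a union of N ℚ-linear subspaces of ℚ^n of dimension n − 1, then m ≤ N + 1. -/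
open Polynomial

/-!
For a word equation `u = v` and a length type `L`, the Fox derivatives of `u` minus those of `v`,
with every unknown `x` weighted by `t ^ L x`, form a vector over the group algebra `ℚ[ℚ]`. It is
nonzero if `u ≠ v` and at most one entry of `L` vanishes, and by the chain rule for Fox derivatives
a morphism of length type `L` solves the equation if and only if its own derivatives are orthogonal
to this vector.

A solution of rank `n - 1` factors through a principal morphism `g` over `n - 1` letters with
independent Parikh vectors. For `L` in their span, the same chain rule applied to `g` shows that the
vector lies in the kernel of an `(n - 1) × n` matrix whose augmentation `t ↦ 1` has full rank. The
kernel therefore has rank one, so any two equations solved by `g` have proportional vectors, and a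
solution of one of them with length type `L` solves the other.

The solutions factoring through `g` have length types filling the positive lattice cone on the
Parikh vectors of `g`, so one of the covering subspaces is the span of these vectors. By the
previous paragraph, solutions witnessing different strict inclusions use different subspaces, and
there are `m - 1` such solutions from `Sol_{n−1}(E₁, E₂)` on.
-/

section FoxCalculus

variable {α β R : Type*} [DecidableEq α] [DecidableEq β]

/-- The Fox derivative `∂w/∂x` of a word, evaluated at the weights `t` of the letters: the sum,
over the occurrences of `x` in `w`, of the weight of the prefix of `w` before the occurrence. -/
def foxDeriv [Semiring R] (t : α → R) : List α → α → R
  | [], _ => 0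
  | y :: w, x => (if y = x then 1 else 0) + t y * foxDeriv t w x

lemma foxDeriv_append [Semiring R] (t : α → R) (w w' : List α) (x : α) :
    foxDeriv t (w ++ w') x = foxDeriv t w x + (w.map t).prod * foxDeriv t w' x := by
  induction w with
  | nil => simp [foxDeriv]
  | cons y w ih => simp [foxDeriv, ih, mul_add, mul_assoc, add_assoc]

lemma foxDeriv_mApply [Semiring R] {n : ℕ} (t : β → R) (h : Fin n → List β) (w : List (Fin n))
    (b : β) :
    foxDeriv t (mApply h w) b =
      ∑ x, foxDeriv (fun x => ((h x).map t).prod) w x * foxDeriv t (h x) b := by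
  induction w with
  | nil => simp [mApply, foxDeriv]
  | cons y w ih =>
    rw [show mApply h (y :: w) = h y ++ mApply h w from rfl, foxDeriv_append, ih]
    simp [foxDeriv, add_mul, Finset.sum_add_distrib, Finset.mul_sum, mul_assoc]

lemma foxDeriv_sub_dotProduct [Ring R] {n : ℕ} (t : β → R) (h : Fin n → List β)
    (u v : List (Fin n)) (b : β) :
    (foxDeriv (fun x => ((h x).map t).prod) u - foxDeriv (fun x => ((h x).map t).prod) v) ⬝ᵥ
        (fun x => foxDeriv t (h x) b) =
      foxDeriv t (mApply h u) b - foxDeriv t (mApply h v) b := by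
  simp [dotProduct, foxDeriv_mApply, sub_mul]

lemma map_foxDeriv {S : Type*} [Semiring R] [Semiring S] (f : R →+* S) (t : α → R) (w : List α)
    (x : α) : f (foxDeriv t w x) = foxDeriv (fun y => f (t y)) w x := by
  induction w with
  | nil => simp [foxDeriv]
  | cons y w ih => simp [foxDeriv, ih, apply_ite f]

lemma foxDeriv_one [Semiring R] (w : List α) (x : α) :
    foxDeriv (fun _ => (1 : R)) w x = w.count x := by
  induction w with
  | nil => simp [foxDeriv]
  | cons y w ih => simp [foxDeriv, ih, List.count_cons, add_comm]

end FoxCalculus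

section GroupAlgebra

variable {α Γ : Type*}

/-- The weights `x ↦ t ^ L x`, as monomials of the group algebra `ℚ[Γ]`. Exponents in a group
rather than in `ℕ` are needed because the weights of the letters of a principal word may be
negative or fractional even when those of the unknowns are natural numbers. -/
noncomputable def monomialWeight (L : α → Γ) (x : α) : AddMonoidAlgebra ℚ Γ :=
  AddMonoidAlgebra.single (L x) 1

lemma prod_map_monomialWeight [AddMonoid Γ] (L : α → Γ) (w : List α) :
    (w.map (monomialWeight L)).prod = AddMonoidAlgebra.single (w.map L).sum 1 := by
  induction w with
  | nil => simp [AddMonoidAlgebra.one_def]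
  | cons y w ih => simp [ih, monomialWeight, AddMonoidAlgebra.single_mul_single]

variable (Γ) in
/-- The augmentation `ℚ[Γ] → ℚ`, sending every monomial to `1`. -/
noncomputable def augmentation [AddMonoid Γ] : AddMonoidAlgebra ℚ Γ →+* ℚ :=
  (AddMonoidAlgebra.lift ℚ ℚ Γ 1 : AddMonoidAlgebra ℚ Γ →+* ℚ)

variable [DecidableEq α]

lemma augmentation_foxDeriv [AddMonoid Γ] (L : α → Γ) (w : List α) (x : α) :
    augmentation Γ (foxDeriv (monomialWeight L) w x) = w.count x := by
  simp [map_foxDeriv, augmentation, monomialWeight, foxDeriv_one]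

lemma foxDeriv_nil_ne_cons [AddMonoid Γ] (L : α → Γ) (y : α) (w : List α) :
    foxDeriv (monomialWeight L) [] ≠ foxDeriv (monomialWeight L) (y :: w) := by
  intro h
  have hy := congrArg (augmentation Γ) (congrFun h y)
  simp only [augmentation_foxDeriv, List.count_nil, List.count_cons_self] at hy
  exact absurd hy (by positivity)

variable [AddCommGroup Γ]

lemma coeff_foxDeriv_cons [DecidableEq Γ] (L : α → Γ) (y : α) (w : List α) (x : α) (q : Γ) :
    (foxDeriv (monomialWeight L) (y :: w) x).coeff q =
      (if y = x ∧ q = 0 then 1 else 0) + (foxDeriv (monomialWeight L) w x).coeff (q - L y) := by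
  by_cases hyx : y = x <;>
    simp [foxDeriv, monomialWeight, hyx, AddMonoidAlgebra.one_def, Finsupp.single_apply,
      sub_eq_neg_add, eq_comm]

lemma coeff_foxDeriv_nonneg (L : α → Γ) (w : List α) (x : α) (q : Γ) :
    0 ≤ (foxDeriv (monomialWeight L) w x).coeff q := by
  induction w generalizing q with
  | nil => simp [foxDeriv]
  | cons y w ih =>
    classical
    rw [coeff_foxDeriv_cons]
    exact add_nonneg (by split_ifs <;> simp) (ih _)

variable [LinearOrder Γ] [IsOrderedAddMonoid Γ]

lemma coeff_foxDeriv_of_neg {L : α → Γ} (hL : 0 ≤ L) (w : List α) (x : α) {q : Γ} (hq : q < 0) :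
    (foxDeriv (monomialWeight L) w x).coeff q = 0 := by
  induction w generalizing q with
  | nil => simp [foxDeriv]
  | cons y w ih =>
    rw [coeff_foxDeriv_cons, if_neg fun h => hq.ne h.2, zero_add]
    exact ih ((sub_le_self q (hL y)).trans_lt hq)

lemma foxDeriv_cons_self_ne {L : α → Γ} (hL : 0 ≤ L) (u v : List α) {x y : α} (hxy : x ≠ y)
    (hy : L y ≠ 0) :
    foxDeriv (monomialWeight L) (x :: u) x ≠ foxDeriv (monomialWeight L) (y :: v) x := by
  intro h
  have hu : 1 ≤ (foxDeriv (monomialWeight L) (x :: u) x).coeff 0 := by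
    simpa [coeff_foxDeriv_cons] using coeff_foxDeriv_nonneg L u x (-L x)
  have hv : (foxDeriv (monomialWeight L) (y :: v) x).coeff 0 = 0 := by
    simpa [coeff_foxDeriv_cons, hxy.symm] using
      coeff_foxDeriv_of_neg hL v x (neg_neg_of_pos ((hL y).lt_of_ne' hy))
  rw [h, hv] at hu
  exact absurd hu (by norm_num)

/-- At the first letters `x ≠ y` where two words differ, one of them, say `y`, has positive weight;
then `t⁰` occurs in the `x`-derivative of the first word only. -/
theorem foxDeriv_injective {L : α → Γ} (hL : 0 ≤ L)
    (hL₀ : ∀ x y, L x = 0 → L y = 0 → x = y) :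
    Function.Injective (foxDeriv (monomialWeight L)) := by
  intro u
  induction u with
  | nil =>
    rintro (_ | ⟨y, v⟩) h
    · rfl
    · exact absurd h (foxDeriv_nil_ne_cons L y v)
  | cons x u ih =>
    rintro (_ | ⟨y, v⟩) h
    · exact absurd h.symm (foxDeriv_nil_ne_cons L x u)
    rcases eq_or_ne x y with rfl | hxy
    · congr 1
      refine ih (funext fun z => ?_)
      have hz := congrFun h z
      simp only [foxDeriv, add_right_inj] at hz
      refine mul_left_cancel₀ ?_ hz
      simp [monomialWeight]
    · by_cases hy : L y = 0
      · have hx : L x ≠ 0 := fun hx => hxy (hL₀ x y hx hy)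
        exact absurd (congrFun h y).symm (foxDeriv_cons_self_ne hL v u hxy.symm hx)
      · exact absurd (congrFun h x) (foxDeriv_cons_self_ne hL u v hxy hy)

end GroupAlgebra

section LinearAlgebra

variable {ι κ R K : Type*}

lemma exists_single_notMem [Semiring K] [Finite κ] [DecidableEq κ]
    {U : Submodule K (κ → K)} (hU : U ≠ ⊤) :
    ∃ x, Pi.single x (1 : K) ∉ U := by
  contrapose! hU
  rw [eq_top_iff, ← (Pi.basisFun K κ).span_eq, Submodule.span_le]
  rintro _ ⟨x, rfl⟩
  simpa using hU x

variable [Fintype κ] [CommRing R] [IsDomain R] [Field K]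

lemma eq_zero_of_dotProduct_eq_zero_of_linearIndependent_map [Fintype ι] (f : R →+* K)
    {S : ι → κ → R} (hS : LinearIndependent K fun i x => f (S i x))
    (hcard : Fintype.card ι = Fintype.card κ) {q : κ → R} (hq : ∀ i, q ⬝ᵥ S i = 0) : q = 0 := by
  classical
  let e : κ ≃ ι := (Fintype.equivOfCardEq hcard).symm
  let M : Matrix κ κ R := Matrix.of fun i x => S (e i) x
  have hM : IsUnit (f.mapMatrix M) :=
    Matrix.linearIndependent_rows_iff_isUnit.mp (hS.comp e e.injective)
  have hdet : M.det ≠ 0 := by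
    intro h
    rw [Matrix.isUnit_iff_isUnit_det, ← RingHom.map_det, h, map_zero] at hM
    exact not_isUnit_zero hM
  refine Matrix.eq_zero_of_mulVec_eq_zero hdet (funext fun i => ?_)
  rw [Pi.zero_apply, ← hq (e i), dotProduct_comm]
  rfl

lemma exists_ne_zero_smul_eq_smul [Fintype ι] (f : R →+* K) {S : ι → κ → R}
    (hS : LinearIndependent K fun i x => f (S i x)) (hcard : Fintype.card ι + 1 = Fintype.card κ)
    {q q' : κ → R} (hq₀ : q ≠ 0) (hq : ∀ i, q ⬝ᵥ S i = 0) (hq' : ∀ i, q' ⬝ᵥ S i = 0) :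
    ∃ c ≠ (0 : R), ∃ c' : R, c • q' = c' • q := by
  classical
  have hspan : Submodule.span K (Set.range fun i x => f (S i x)) ≠ ⊤ := by
    intro htop
    have := finrank_span_eq_card hS
    rw [htop, finrank_top, Module.finrank_fintype_fun_eq_card] at this
    omega
  obtain ⟨x₀, hx₀⟩ := exists_single_notMem hspan
  have eq_zero : ∀ p : κ → R, (∀ i, p ⬝ᵥ S i = 0) → p x₀ = 0 → p = 0 := by
    intro p hp hp₀
    refine eq_zero_of_dotProduct_eq_zero_of_linearIndependent_map f
      (S := fun o : Option ι => o.casesOn' (Pi.single x₀ 1) S) ?_ (by simpa using hcard) ?_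
    · convert hS.option hx₀ with o x
      · cases o <;> simp [Pi.single_apply, apply_ite f]
      · rfl
    · rintro (_ | i)
      · simpa using hp₀
      · exact hp i
  refine ⟨q x₀, fun h => hq₀ (eq_zero q hq h), q' x₀, sub_eq_zero.mp (eq_zero _ (fun i => ?_) ?_)⟩
  · simp [sub_dotProduct, hq i, hq' i]
  · simp [mul_comm]

/-- Some `U j` contains infinitely many of the points `(1, t, t², …)`, so by Vandermonde no nonzero
linear form vanishes on it. -/
lemma exists_eq_top_of_forall_pos_mem {N : ℕ} [CharZero K] [Finite ι]
    (U : ι → Submodule K (Fin N → K))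
    (hU : ∀ w : Fin N → ℕ, (∀ i, 0 < w i) → ∃ j, (fun i => (w i : K)) ∈ U j) :
    ∃ j, U j = ⊤ := by
  choose j hj using fun t : ℕ => hU (fun i => (t + 1) ^ (i : ℕ)) fun i => by positivity
  obtain ⟨j₀, hj₀⟩ := Finite.exists_infinite_fiber j
  refine ⟨j₀, by_contra fun hne => ?_⟩
  obtain ⟨φ, hφ, hker⟩ := Submodule.exists_le_ker_of_lt_top (U j₀) (lt_top_iff_ne_top.mpr hne)
  let t : ℕ ↪ ↥(j ⁻¹' {j₀}) := Infinite.natEmbedding _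
  have hinj : Function.Injective fun k : Fin N => ((t k : ℕ) + 1 : K) := fun a b hab =>
    Fin.val_injective (t.injective (Subtype.ext (Nat.cast_injective (add_right_cancel hab))))
  have hφ₀ : (fun i => φ (Pi.single i 1)) = 0 := by
    refine Matrix.eq_zero_of_forall_index_sum_pow_mul_eq_zero hinj fun k => ?_
    have hmem := hker ((t k).2 ▸ hj (t k))
    rw [LinearMap.mem_ker, LinearMap.pi_apply_eq_sum_univ] at hmem
    have hsingle : ∀ i : Fin N, (fun j => if i = j then (1 : K) else 0) = Pi.single i 1 :=
      fun i => funext fun j => by simp [Pi.single_apply, eq_comm]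
    simpa [hsingle, mul_comm] using hmem
  exact hφ (LinearMap.pi_ext' fun i => LinearMap.ext_ring (congrFun hφ₀ i))

lemma exists_eq_span_of_forall_pos_mem {M : Type*} [AddCommGroup M] [Module K M]
    [FiniteDimensional K M] [CharZero K] [Finite ι] {N : ℕ} {v : Fin N → M}
    (hv : LinearIndependent K v) {V : ι → Submodule K M} (hV : ∀ j, Module.finrank K (V j) ≤ N)
    (hcov : ∀ w : Fin N → ℕ, (∀ i, 0 < w i) → ∃ j, ∑ i, (w i : K) • v i ∈ V j) :
    ∃ j, V j = Submodule.span K (Set.range v) := by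
  obtain ⟨j, hj⟩ := exists_eq_top_of_forall_pos_mem
    (fun j => (V j).comap (Fintype.linearCombination K v))
    (by simpa [Fintype.linearCombination_apply] using hcov)
  refine ⟨j, (Submodule.eq_of_le_of_finrank_le ?_ ?_).symm⟩
  · rw [← Fintype.range_linearCombination K]
    exact LinearMap.range_le_iff_comap.mpr hj
  · simpa [finrank_span_eq_card hv] using hV j

end LinearAlgebra

section Parikh

variable {β : Type*} {n r : ℕ}

lemma mApply_append (h : Fin n → List β) (w w' : List (Fin n)) :
    mApply h (w ++ w') = mApply h w ++ mApply h w' := by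
  simp [mApply]

lemma mApply_mApply (θ : Fin r → List β) (g : Fin n → List (Fin r)) (w : List (Fin n)) :
    mApply θ (mApply g w) = mApply (fun x => mApply θ (g x)) w := by
  induction w with
  | nil => rfl
  | cons x w ih => exact (mApply_append θ (g x) (mApply g w)).trans (congrArg _ ih)

variable [DecidableEq β]

/-- The Parikh vector of the letter `b` under the morphism `g`: its number of occurrences in the
images of the unknowns. -/
def parikh (g : Fin n → List β) (b : β) (x : Fin n) : ℚ :=
  (g x).count b

lemma sum_map_eq_sum_smul_parikh [Fintype β] (g : Fin n → List β) (μ : β → ℚ) (x : Fin n) :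
    ((g x).map μ).sum = (∑ b, μ b • parikh g b) x := by
  rw [Finset.sum_list_map_count, Finset.sum_subset (Finset.subset_univ _)]
  · simp [parikh, mul_comm]
  · simp +contextual [List.count_eq_zero_of_not_mem]

lemma lenQ_mApply (θ : Fin r → List ℕ) (g : Fin n → List (Fin r)) :
    lenQ (fun x => mApply θ (g x)) = ∑ i, lenQ θ i • parikh g i := by
  funext x
  rw [← sum_map_eq_sum_smul_parikh]
  simp [lenQ, mApply, List.length_flatten, Nat.cast_list_sum, Function.comp_def]
  rfl

lemma parikh_mApply (θ : Fin r → List β) (g : Fin n → List (Fin r)) (b : β) :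
    parikh (fun x => mApply θ (g x)) b = ∑ i, parikh θ b i • parikh g i := by
  funext x
  rw [← sum_map_eq_sum_smul_parikh]
  simp [parikh, mApply, List.count_flatten, Nat.cast_list_sum, Function.comp_def]
  rfl

lemma linearIndependent_parikh_iff [Finite β] {g : Fin n → List β} :
    LinearIndependent ℚ (parikh g) ↔ ∀ μ : β → ℚ, (∀ x, ((g x).map μ).sum = 0) → ∀ b, μ b = 0 := by
  have := Fintype.ofFinite β
  simp only [Fintype.linearIndependent_iff, sum_map_eq_sum_smul_parikh, funext_iff, Pi.zero_apply]

lemma linearIndependent_parikh_mApply {θ : Fin r → List β} {g : Fin n → List (Fin r)}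
    (hθ : LinearIndependent ℚ (parikh θ)) (hg : LinearIndependent ℚ (parikh g)) :
    LinearIndependent ℚ (parikh fun x => mApply θ (g x)) := by
  have hcomp : parikh (fun x => mApply θ (g x)) =
      Fintype.linearCombination ℚ (parikh g) ∘ parikh θ :=
    funext fun b => by simp [parikh_mApply, Fintype.linearCombination_apply]
  rw [hcomp]
  exact hθ.map' _ (LinearMap.ker_eq_bot.mpr hg.fintypeLinearCombination_injective)

/-- Weigh the letters of `g` by `μ`: the weight of `g x` is then `t ^ L x`, and the chain rule for
Fox derivatives turns `g u = g v` into linear equations over `ℚ[ℚ]`. -/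
lemma foxDeriv_sub_dotProduct_eq_zero [Fintype β] {g : Fin n → List β} {L : Fin n → ℚ} {μ : β → ℚ}
    (hL : ∑ b, μ b • parikh g b = L) {u v : List (Fin n)} (huv : mApply g u = mApply g v) (b : β) :
    (foxDeriv (monomialWeight L) u - foxDeriv (monomialWeight L) v) ⬝ᵥ
      (fun x => foxDeriv (monomialWeight μ) (g x) b) = 0 := by
  have hweight : monomialWeight L = fun x => ((g x).map (monomialWeight μ)).prod := by
    funext x
    rw [prod_map_monomialWeight, sum_map_eq_sum_smul_parikh, hL, monomialWeight]
  rw [hweight, foxDeriv_sub_dotProduct, huv, sub_self]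

lemma linearIndependent_augmentation_foxDeriv {g : Fin n → List β}
    (hg : LinearIndependent ℚ (parikh g)) (μ : β → ℚ) :
    LinearIndependent ℚ fun b x => augmentation ℚ (foxDeriv (monomialWeight μ) (g x) b) := by
  simp only [augmentation_foxDeriv]
  exact hg

theorem injective_mApply_of_linearIndependent_parikh {g : Fin n → List (Fin n)}
    (hg : LinearIndependent ℚ (parikh g)) : Function.Injective (mApply g) := by
  intro u v huv
  have hspan : (1 : Fin n → ℚ) ∈ Submodule.span ℚ (Set.range (parikh g)) := by
    rw [hg.span_eq_top_of_card_eq_finrank' (by simp)]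
    exact Submodule.mem_top
  obtain ⟨μ, hμ⟩ := (Submodule.mem_span_range_iff_exists_fun ℚ).mp hspan
  refine foxDeriv_injective (L := (1 : Fin n → ℚ)) zero_le_one (by simp) (sub_eq_zero.mp ?_)
  exact eq_zero_of_dotProduct_eq_zero_of_linearIndependent_map (augmentation ℚ)
    (linearIndependent_augmentation_foxDeriv hg μ) rfl
    (foxDeriv_sub_dotProduct_eq_zero hμ huv)

theorem mApply_eq_of_lenQ_mem_span_parikh {g : Fin (r + 1) → List (Fin r)}
    (hg : LinearIndependent ℚ (parikh g)) {h : Fin (r + 1) → List ℕ}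
    (hlen : lenQ h ∈ Submodule.span ℚ (Set.range (parikh g)))
    (hnil : ∀ x y, h x = [] → h y = [] → x = y) {u v u' v' : List (Fin (r + 1))} (hne : u ≠ v)
    (hguv : mApply g u = mApply g v) (hhuv : mApply h u = mApply h v)
    (hguv' : mApply g u' = mApply g v') : mApply h u' = mApply h v' := by
  obtain ⟨μ, hμ⟩ := (Submodule.mem_span_range_iff_exists_fun ℚ).mp hlen
  have hweight : monomialWeight (lenQ h) =
      fun x => ((h x).map (monomialWeight fun _ : ℕ => (1 : ℚ))).prod := by
    funext x
    simp [prod_map_monomialWeight, monomialWeight, lenQ]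
  have hinj : Function.Injective (foxDeriv (monomialWeight (lenQ h))) :=
    foxDeriv_injective (fun x => Nat.cast_nonneg _) fun x y hx hy =>
      hnil x y (by simpa [lenQ] using hx) (by simpa [lenQ] using hy)
  obtain ⟨c, hc, c', hcc'⟩ := exists_ne_zero_smul_eq_smul (augmentation ℚ)
    (linearIndependent_augmentation_foxDeriv hg μ) (by simp) (sub_ne_zero.mpr (hinj.ne hne))
    (foxDeriv_sub_dotProduct_eq_zero hμ hguv) (foxDeriv_sub_dotProduct_eq_zero hμ hguv')
  refine foxDeriv_injective (L := fun _ : ℕ => (1 : ℚ)) (fun _ => zero_le_one) (by simp)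
    (funext fun a => ?_)
  have hzero := congrArg
    (· ⬝ᵥ fun x => foxDeriv (monomialWeight fun _ : ℕ => (1 : ℚ)) (h x) a) hcc'
  simp only [smul_dotProduct, hweight, foxDeriv_sub_dotProduct, hhuv, sub_self, smul_zero] at hzero
  exact sub_eq_zero.mp ((smul_eq_zero.mp hzero).resolve_left hc)

end Parikh

section Defect

variable {β : Type*} {n r : ℕ}

lemma injective_mApply_of_prefix_free {h : Fin n → List β} (hnil : ∀ x, h x ≠ [])
    (hpre : ∀ x y, h x <+: h y → x = y) : Function.Injective (mApply h) := by
  intro u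
  induction u with
  | nil =>
    rintro (_ | ⟨y, v⟩) huv
    · rfl
    · exact absurd (List.append_eq_nil_iff.mp huv.symm).1 (hnil y)
  | cons x u ih =>
    rintro (_ | ⟨y, v⟩) huv
    · exact absurd (List.append_eq_nil_iff.mp huv).1 (hnil x)
    change h x ++ mApply h u = h y ++ mApply h v at huv
    obtain rfl : x = y := (List.prefix_or_prefix_of_prefix (List.prefix_append (h x) (mApply h u))
      (huv ▸ List.prefix_append (h y) (mApply h v))).elim (hpre x y) fun hyx => (hpre y x hyx).symm
    rw [ih (List.append_cancel_left huv)]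

lemma exists_factor_of_eq_nil {h : Fin n → List β} {x₀ : Fin n} (hx₀ : h x₀ = []) :
    ∃ (r : ℕ) (e : Fin n → List (Fin r)) (h' : Fin r → List β),
      LinearIndependent ℚ (parikh e) ∧ (∀ x, h x = mApply h' (e x)) ∧
        ∑ i, ((h' i).length + 1) < ∑ x, ((h x).length + 1) := by
  cases n with
  | zero => exact x₀.elim0
  | succ k =>
    refine ⟨k, x₀.insertNth (α := fun _ => List (Fin k)) [] fun i => [i], h ∘ x₀.succAbove,
      linearIndependent_parikh_iff.mpr fun μ hμ i => ?_, fun x => ?_, ?_⟩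
    · simpa using hμ (x₀.succAbove i)
    · rcases x₀.eq_self_or_eq_succAbove x with rfl | ⟨i, rfl⟩ <;> simp [mApply, hx₀]
    · simp [Fin.sum_univ_succAbove _ x₀, hx₀]

lemma exists_factor_of_prefix {h : Fin n → List β} (hnil : ∀ x, h x ≠ []) {y z : Fin n}
    (hyz : y ≠ z) (hpre : h y <+: h z) :
    ∃ (e : Fin n → List (Fin n)) (h' : Fin n → List β),
      LinearIndependent ℚ (parikh e) ∧ (∀ x, h x = mApply h' (e x)) ∧
        ∑ i, ((h' i).length + 1) < ∑ x, ((h x).length + 1) := by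
  obtain ⟨s, hs⟩ := hpre
  refine ⟨Function.update (fun x => [x]) z [y, z], Function.update h z s,
    linearIndependent_parikh_iff.mpr fun μ hμ => ?_, fun x => ?_, ?_⟩
  · have hμ_ne : ∀ x ≠ z, μ x = 0 := fun x hx => by simpa [hx] using hμ x
    intro x
    rcases eq_or_ne x z with rfl | hx
    · simpa [hμ_ne y hyz] using hμ x
    · exact hμ_ne x hx
  · rcases eq_or_ne x z with rfl | hx
    · simp [mApply, hyz, hs]
    · simp [mApply, hx]
  · refine Finset.sum_lt_sum (fun x _ => ?_) ⟨z, Finset.mem_univ z, ?_⟩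
    · rcases eq_or_ne x z with rfl | hx
      · simp [← hs]
      · simp [hx]
    · simpa [← hs] using List.length_pos_iff.mpr (hnil y)

/-- `g` is a principal morphism through which `h` factors: `h = θ ∘ g` with `θ` injective, and the
Parikh vectors of `g` are linearly independent. The independence replaces the usual minimality of
the number of letters of `g`. -/
structure IsPrincipalFactor (g : Fin n → List (Fin r)) (h : Fin n → List β) : Prop where
  linearIndependent : LinearIndependent ℚ (parikh g)
  exists_eq_mApply : ∃ θ : Fin r → List β, Function.Injective (mApply θ) ∧ ∀ x, h x = mApply θ (g x)

lemma IsPrincipalFactor.mApply_eq_iff {g : Fin n → List (Fin r)} {h : Fin n → List β}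
    (hg : IsPrincipalFactor g h) {u v : List (Fin n)} :
    mApply h u = mApply h v ↔ mApply g u = mApply g v := by
  obtain ⟨θ, hθ, hfac⟩ := hg.exists_eq_mApply
  rw [funext hfac, ← mApply_mApply, ← mApply_mApply, hθ.eq_iff]

lemma IsPrincipalFactor.lenQ_mem_span {g : Fin n → List (Fin r)} {h : Fin n → List ℕ}
    (hg : IsPrincipalFactor g h) : lenQ h ∈ Submodule.span ℚ (Set.range (parikh g)) := by
  obtain ⟨θ, -, hfac⟩ := hg.exists_eq_mApply
  rw [funext hfac, lenQ_mApply]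
  exact Submodule.sum_smul_mem _ _ fun i _ => Submodule.subset_span ⟨i, rfl⟩

/-- A failure of injectivity is removed by erasing an empty word or by cutting a
prefix `h y` off `h z`. -/
theorem exists_isPrincipalFactor (h : Fin n → List β) :
    ∃ (r : ℕ) (g : Fin n → List (Fin r)), IsPrincipalFactor g h := by
  induction hk : ∑ x, ((h x).length + 1) using Nat.strong_induction_on generalizing n with
  | _ k ih =>
    by_cases hinj : Function.Injective (mApply h)
    · exact ⟨n, fun x => [x], linearIndependent_parikh_iff.mpr (by simp), h, hinj, by simp [mApply]⟩
    obtain ⟨r, e, h', he, hfac, hlt⟩ : ∃ (r : ℕ) (e : Fin n → List (Fin r)) (h' : Fin r → List β),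
        LinearIndependent ℚ (parikh e) ∧ (∀ x, h x = mApply h' (e x)) ∧
          ∑ i, ((h' i).length + 1) < ∑ x, ((h x).length + 1) := by
      by_cases hnil : ∃ x, h x = []
      · exact exists_factor_of_eq_nil hnil.choose_spec
      push Not at hnil
      have hpre := mt (injective_mApply_of_prefix_free hnil) hinj
      push Not at hpre
      obtain ⟨y, z, hyz, hne⟩ := hpre
      exact ⟨n, exists_factor_of_prefix hnil hne hyz⟩
    obtain ⟨s, g, hg, θ, hθ, hfac'⟩ := ih _ (hk ▸ hlt) h' rfl
    refine ⟨s, fun x => mApply g (e x), linearIndependent_parikh_mApply hg he, θ, hθ, fun x => ?_⟩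
    rw [hfac, mApply_mApply, funext hfac']

end Defect

section Rank

variable {n r N : ℕ}

lemma mRank_le_card {h : Fin n → List ℕ} {B : Finset (List ℕ)} (hB : ∀ x, InStar B (h x)) :
    mRank h ≤ B.card :=
  Nat.sInf_le ⟨B, rfl, hB⟩

lemma mRank_mApply_le (θ : Fin r → List ℕ) (g : Fin n → List (Fin r)) :
    mRank (fun x => mApply θ (g x)) ≤ r := by
  refine (mRank_le_card (B := Finset.univ.image θ) fun x => ⟨(g x).map θ, ?_, rfl⟩).trans
    (Finset.card_image_le.trans_eq (Finset.card_fin r))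
  simp +contextual

lemma mRank_le_card_ne_nil (h : Fin n → List ℕ) :
    mRank h ≤ (Finset.univ.filter fun x => h x ≠ []).card := by
  refine (mRank_le_card (B := (Finset.univ.filter fun x => h x ≠ []).image h) fun x => ?_).trans
    Finset.card_image_le
  by_cases hx : h x = []
  · exact ⟨[], by simp [hx]⟩
  · exact ⟨[h x], by simpa using ⟨x, hx, rfl⟩, by simp⟩

lemma eq_of_eq_nil_of_le_mRank {h : Fin (N + 1) → List ℕ} (hr : N ≤ mRank h) {x y : Fin (N + 1)}
    (hx : h x = []) (hy : h y = []) : x = y := by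
  by_contra hxy
  have hsub : (Finset.univ.filter fun x => h x ≠ []) ⊆ Finset.univ \ {x, y} := by
    intro z hz
    simp only [Finset.mem_filter, Finset.mem_univ, true_and] at hz
    simp only [Finset.mem_sdiff, Finset.mem_univ, Finset.mem_insert, Finset.mem_singleton, true_and]
    rintro (rfl | rfl) <;> contradiction
  have hcard := (hr.trans (mRank_le_card_ne_nil h)).trans (Finset.card_le_card hsub)
  rw [Finset.card_sdiff_of_subset (Finset.subset_univ _), Finset.card_pair hxy,
    Finset.card_fin] at hcard
  omega

lemma mRank_le_card_letters (h : Fin n → List ℕ) :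
    mRank h ≤ (Finset.univ.biUnion fun x => (h x).toFinset).card := by
  refine (mRank_le_card (B := (Finset.univ.biUnion fun x => (h x).toFinset).image fun a => [a])
    fun x => ⟨(h x).map fun a => [a], ?_, by simp [← List.flatMap_def]⟩).trans Finset.card_image_le
  simp only [List.mem_map, Finset.mem_image, Finset.mem_biUnion, Finset.mem_univ, true_and,
    List.mem_toFinset]
  rintro _ ⟨a, ha, rfl⟩
  exact ⟨a, ⟨x, ha⟩, rfl⟩

lemma exists_eq_mApply_mRank (h : Fin n → List ℕ) :
    ∃ (e : Fin n → List (Fin (mRank h))) (θ : Fin (mRank h) → List ℕ),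
      ∀ x, h x = mApply θ (e x) := by
  obtain ⟨B, hB, hstar⟩ := Nat.sInf_mem (s := {r | ∃ A : Finset (List ℕ), A.card = r ∧
    ∀ x, InStar A (h x)}) ⟨_, Finset.univ.image h, rfl, fun x => ⟨[h x], by simp, by simp⟩⟩
  choose l hl hflat using hstar
  let σ : B ≃ Fin (mRank h) := B.equivFinOfCardEq hB
  refine ⟨fun x => (l x).pmap (fun w hw => σ ⟨w, hw⟩) (hl x), fun i => σ.symm i, fun x => ?_⟩
  simp [mApply, List.map_pmap, hflat]

lemma card_le_mRank_of_linearIndependent {ι : Type*} [Fintype ι] {h : Fin n → List ℕ} {a : ι → ℕ}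
    (hLI : LinearIndependent ℚ fun i => parikh h (a i)) : Fintype.card ι ≤ mRank h := by
  obtain ⟨e, θ, hfac⟩ := exists_eq_mApply_mRank h
  have hle : Submodule.span ℚ (Set.range fun i => parikh h (a i)) ≤
      Submodule.span ℚ (Set.range (parikh e)) := by
    rw [Submodule.span_le]
    rintro _ ⟨i, rfl⟩
    simp only [funext hfac, parikh_mApply]
    exact Submodule.sum_smul_mem _ _ fun j _ => Submodule.subset_span ⟨j, rfl⟩
  calc Fintype.card ι = _ := (finrank_span_eq_card hLI).symm
    _ ≤ _ := Submodule.finrank_mono hle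
    _ ≤ _ := finrank_range_le_card _
    _ = mRank h := Fintype.card_fin _

lemma mRank_mApply_replicate {g : Fin n → List (Fin r)} (hg : LinearIndependent ℚ (parikh g))
    {a : Fin r → ℕ} (ha : Function.Injective a) {k : Fin r → ℕ} (hk : ∀ i, 0 < k i) :
    mRank (fun x => mApply (fun i => List.replicate (k i) (a i)) (g x)) = r := by
  refine (mRank_mApply_le _ g).antisymm ?_
  have hrow : ∀ j, parikh (fun x => mApply (fun i => List.replicate (k i) (a i)) (g x)) (a j) =
      (k j : ℚ) • parikh g j := fun j => by
    rw [parikh_mApply, Finset.sum_eq_single j] <;>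
      simp +contextual [parikh, List.count_replicate, ha.eq_iff]
  have hLI : LinearIndependent ℚ fun j => (k j : ℚ) • parikh g j :=
    hg.units_smul fun j => Units.mk0 (k j : ℚ) (Nat.cast_ne_zero.mpr (hk j).ne')
  simpa using card_le_mRank_of_linearIndependent (a := a) (by simpa only [hrow] using hLI)

theorem exists_isPrincipalFactor_of_mRank_eq {h : Fin (N + 1) → List ℕ} (hr : mRank h = N)
    {u v : List (Fin (N + 1))} (hne : u ≠ v) (huv : mApply h u = mApply h v) :
    ∃ g : Fin (N + 1) → List (Fin N), IsPrincipalFactor g h := by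
  obtain ⟨r, g, hg⟩ := exists_isPrincipalFactor h
  have hle : r ≤ N + 1 := by simpa using hg.linearIndependent.fintype_card_le_finrank
  have hge : N ≤ r := by
    obtain ⟨θ, -, hfac⟩ := hg.exists_eq_mApply
    rw [← hr, funext hfac]
    exact mRank_mApply_le θ g
  obtain rfl | rfl : r = N + 1 ∨ r = N := by omega
  · exact absurd (injective_mApply_of_linearIndependent_parikh hg.linearIndependent
      (hg.mApply_eq_iff.mp huv)) hne
  · exact ⟨g, hg⟩

end Rank

section Chain

variable {n m N : ℕ} {ι : Type*}

/-- `Sol_{n−1}(E₁, …, E_k)`: the common solutions of rank `n - 1`, over the alphabet `A`, of the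
first `k` equations. -/
def rankSol (A : Set ℕ) (eqs : Fin m → List (Fin n) × List (Fin n)) (k : ℕ) :
    Set (Fin n → List ℕ) :=
  {h | (∀ x, ∀ a ∈ h x, a ∈ A) ∧ mRank h = n - 1 ∧
    ∀ i : Fin m, (i : ℕ) < k → mApply h (eqs i).1 = mApply h (eqs i).2}

/-- Replacing the letters of `g` by arbitrary powers of distinct letters of `A` yields further
solutions. -/
lemma exists_eq_span_parikh_of_cover [Finite ι] {A : Set ℕ}
    {eqs : Fin m → List (Fin (N + 1)) × List (Fin (N + 1))} {k : ℕ}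
    {V : ι → Submodule ℚ (Fin (N + 1) → ℚ)} (hV : ∀ j, Module.finrank ℚ (V j) ≤ N)
    (hcov : ∀ h ∈ rankSol A eqs k, ∃ j, lenQ h ∈ V j) {h : Fin (N + 1) → List ℕ}
    (hh : h ∈ rankSol A eqs k) {g : Fin (N + 1) → List (Fin N)} (hg : IsPrincipalFactor g h) :
    ∃ j, V j = Submodule.span ℚ (Set.range (parikh g)) := by
  obtain ⟨hA, hr, hsol⟩ := hh
  have hcard := hr.symm.trans_le (mRank_le_card_letters h)
  let a := Finset.orderEmbOfCardLe _ hcard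
  have ha : ∀ i, a i ∈ A := fun i => by
    obtain ⟨x, -, hx⟩ := Finset.mem_biUnion.mp (Finset.orderEmbOfCardLe_mem _ hcard i)
    exact hA x _ (List.mem_toFinset.mp hx)
  refine exists_eq_span_of_forall_pos_mem hg.linearIndependent hV fun w hw => ?_
  let θ : Fin N → List ℕ := fun i => List.replicate (w i) (a i)
  have hlen : ∑ i, (w i : ℚ) • parikh g i = lenQ fun x => mApply θ (g x) := by
    simp [lenQ_mApply, lenQ, θ]
  rw [hlen]
  refine hcov _ ⟨fun x b hb => ?_, mRank_mApply_replicate hg.linearIndependent a.injective hw,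
    fun i hi => ?_⟩
  · obtain ⟨i, -, -, rfl⟩ : ∃ i ∈ g x, w i ≠ 0 ∧ b = a i := by simpa [mApply, θ] using hb
    exact ha i
  · rw [← mApply_mApply, hg.mApply_eq_iff.mp (hsol i hi), mApply_mApply]

lemma mem_rankSol_of_span_parikh_eq {A : Set ℕ}
    {eqs : Fin m → List (Fin (N + 1)) × List (Fin (N + 1))} {i₀ : Fin m}
    (hnt : (eqs i₀).1 ≠ (eqs i₀).2) {k k' : ℕ} (hk : i₀ < k) (hk' : i₀ < k')
    {h h' : Fin (N + 1) → List ℕ} (hh : h ∈ rankSol A eqs k) (hh' : h' ∈ rankSol A eqs k')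
    {g g' : Fin (N + 1) → List (Fin N)} (hg : IsPrincipalFactor g h) (hg' : IsPrincipalFactor g' h')
    (hspan : Submodule.span ℚ (Set.range (parikh g)) = Submodule.span ℚ (Set.range (parikh g'))) :
    h ∈ rankSol A eqs k' :=
  ⟨hh.1, hh.2.1, fun i hi => mApply_eq_of_lenQ_mem_span_parikh hg'.linearIndependent
    (hspan ▸ hg.lenQ_mem_span) (fun _ _ => eq_of_eq_nil_of_le_mRank hh.2.1.ge) hnt
    (hg'.mApply_eq_iff.mp (hh'.2.2 i₀ hk')) (hh.2.2 i₀ hk) (hg'.mApply_eq_iff.mp (hh'.2.2 i hi))⟩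

lemma rankSol_antitone (A : Set ℕ) (eqs : Fin m → List (Fin n) × List (Fin n)) :
    Antitone (rankSol A eqs) :=
  fun _ _ hkl _ hh => ⟨hh.1, hh.2.1, fun i hi => hh.2.2 i (hi.trans_le hkl)⟩

lemma exists_mem_rankSol_forall_notMem {A : Set ℕ} {eqs : Fin m → List (Fin n) × List (Fin n)}
    (hne : (rankSol A eqs m).Nonempty) {k : ℕ} (hkm : k ≤ m)
    (hchain : k < m → rankSol A eqs (k + 1) ⊂ rankSol A eqs k) :
    ∃ h ∈ rankSol A eqs k, ∀ l ≤ m, k < l → h ∉ rankSol A eqs l := by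
  rcases hkm.eq_or_lt with rfl | hlt
  · obtain ⟨h, hh⟩ := hne
    exact ⟨h, hh, fun l hlm hml => absurd hml hlm.not_gt⟩
  · obtain ⟨h, hh, hh'⟩ := Set.exists_of_ssubset (hchain hlt)
    exact ⟨h, hh, fun l _ hkl hl => hh' (rankSol_antitone A eqs hkl hl)⟩

theorem chain_length_le_cover_size_general [Fintype ι] {A : Set ℕ}
    {eqs : Fin m → List (Fin n) × List (Fin n)}
    (hnt : ∀ i : Fin m, (i : ℕ) = 0 → (eqs i).1 ≠ (eqs i).2)
    (hchain : ∀ k, 2 ≤ k → k < m → rankSol A eqs (k + 1) ⊂ rankSol A eqs k)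
    (hne : (rankSol A eqs m).Nonempty) {V : ι → Submodule ℚ (Fin n → ℚ)}
    (hV : ∀ j, Module.finrank ℚ (V j) ≤ n - 1)
    (hcov : ∀ h ∈ rankSol A eqs 2, ∃ j, lenQ h ∈ V j) : m ≤ Fintype.card ι + 1 := by
  rcases m.eq_zero_or_pos with rfl | hm
  · exact Nat.zero_le _
  have hnt₀ := hnt ⟨0, hm⟩ rfl
  obtain _ | N := n
  · exact absurd (Subsingleton.elim _ _) hnt₀
  choose h hmem hnotMem using fun c : Fin (m - 1) =>
    exists_mem_rankSol_forall_notMem hne (k := c + 2) (by omega) (hchain (c + 2) (by omega))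
  choose g hg using fun c => exists_isPrincipalFactor_of_mRank_eq (hmem c).2.1 hnt₀
    ((hmem c).2.2 ⟨0, hm⟩ (Nat.succ_pos _))
  choose j hj using fun c : Fin (m - 1) => exists_eq_span_parikh_of_cover hV
    (fun h' hh' => hcov h' (rankSol_antitone A eqs (Nat.le_add_left 2 c) hh')) (hmem c) (hg c)
  have hj_inj : Function.Injective j := .of_lt_imp_ne fun c d hcd heq =>
    hnotMem c (d + 2) (by omega) (by omega) <|
      mem_rankSol_of_span_parikh_eq hnt₀ (Nat.succ_pos _) (Nat.succ_pos _) (hmem c) (hmem d) (hg c)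
        (hg d) (by rw [← hj c, ← hj d, heq])
  have hcard := Fintype.card_le_of_injective j hj_inj
  rw [Fintype.card_fin] at hcard
  omega

end Chain

/-- Let `E₁, …, E_m` be nontrivial equations on `n` unknowns with
`Sol_{n−1}(E₁) ⊋ Sol_{n−1}(E₁,E₂) ⊋ ⋯ ⊋ Sol_{n−1}(E₁,…,E_m) ≠ ∅`. If the length types of
the common solutions of `E₁` and `E₂` of rank `n − 1` are covered by a union of `N`
`(n − 1)`-dimensional subspaces of `ℚⁿ`, then `m ≤ N + 1`. -/
theorem chain_length_le_cover_size {n m : ℕ}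
    (A : Finset ℕ) (hA : ∀ a ∈ A, 0 < a)
    (eqs : Fin m → List (Fin n) × List (Fin n))
    (hnt : ∀ i, (eqs i).1 ≠ (eqs i).2)
    (hchain : ∀ k : ℕ, 1 ≤ k → k < m →
      {h : Fin n → List ℕ | IntoAlph A h ∧ mRank h = n - 1 ∧
          ∀ i : Fin m, (i : ℕ) < k + 1 → mApply h (eqs i).1 = mApply h (eqs i).2}
        ⊂ {h : Fin n → List ℕ | IntoAlph A h ∧ mRank h = n - 1 ∧
            ∀ i : Fin m, (i : ℕ) < k → mApply h (eqs i).1 = mApply h (eqs i).2})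
    (hne : {h : Fin n → List ℕ | IntoAlph A h ∧ mRank h = n - 1 ∧
        ∀ i : Fin m, mApply h (eqs i).1 = mApply h (eqs i).2}.Nonempty)
    (N : ℕ) (V : Fin N → Submodule ℚ (Fin n → ℚ))
    (hdim : ∀ j, Module.finrank ℚ (V j) = n - 1)
    (hcov : ∀ h : Fin n → List ℕ, IntoAlph A h → mRank h = n - 1 →
      (∀ i : Fin m, (i : ℕ) < 2 → mApply h (eqs i).1 = mApply h (eqs i).2) →
      ∃ j, lenQ h ∈ V j) :
    m ≤ N + 1 := by
  obtain ⟨h, hh, hr, hsol⟩ := hne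
  simpa using chain_length_le_cover_size_general (A := A) (fun i _ => hnt i)
    (fun k hk => hchain k (by omega)) ⟨h, hh, hr, fun i _ => hsol i⟩ (fun j => (hdim j).le)
    fun h' hh' => hcov h' hh'.1 hh'.2.1 hh'.2.2
end
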